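/- arXiv:1301.5941 — 9 statements merged into one kernel-verified Lean document; each statement's English description precedes it below -/
import Mathlib

section
/- Let δ ∈ (0, 1/2) and let g : (0, 1−δ) → ℝ be admissible. Define ψ(s) = s(−g(s) + 1/2) − s² for s ∈ (0, 1−δ), b₀(x) = (1−x)ψ(x) − x·ψ(1−x) for x ∈ (δ, 1−δ), and σ(x) = √2·x(1−x). Then ∫_{1/2}^{1−δ} exp( −∫_{1/2}^y 2·b₀(z)/σ(z)² dz ) dy = +∞ if and only if ∫_{1/2}^{1−δ} exp( ∫_{1/2}^y g(z)/(z(1−z)) dz ) dy = +∞. -/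
open MeasureTheory Set Filter Real Topology

/-!
On `[1/2, 1-δ)` one computes
`-2 b₀(z)/σ(z)² = g(z)/(z(1-z)) - h(z)` with `h(z) = (g(1-z) + 1 - 2z)/(z(1-z))`.
For `z ∈ [1/2, 1-δ]` the reflected point `1-z` stays in the compact set `[δ, 1/2] ⊂ (0, 1-δ)`,
so `h` is bounded there and the two exponents differ by a bounded function. Hence the two
exponentials are comparable up to a constant factor, and `lintegral_exp_eq_top_of_le` transfers
divergence in both directions.
-/

/-- Divergence of the integral of `exp A` passes to `exp B` when `A ≤ B + M`. The integrals are
lower Lebesgue integrals, so no measurability of `A` and `B` is needed. -/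
lemma lintegral_exp_eq_top_of_le {s : Set ℝ} (hs : MeasurableSet s) {A B : ℝ → ℝ} {M : ℝ}
    (h : ∀ y ∈ s, A y ≤ B y + M)
    (hA : ∫⁻ y in s, ENNReal.ofReal (Real.exp (A y)) = ⊤) :
    ∫⁻ y in s, ENNReal.ofReal (Real.exp (B y)) = ⊤ := by
  have hle : ∫⁻ y in s, ENNReal.ofReal (Real.exp (A y))
      ≤ ENNReal.ofReal (Real.exp M) * ∫⁻ y in s, ENNReal.ofReal (Real.exp (B y)) := by
    rw [← lintegral_const_mul' _ _ ENNReal.ofReal_ne_top]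
    refine setLIntegral_mono' hs fun y hy => ?_
    rw [← ENNReal.ofReal_mul (Real.exp_pos M).le, ← Real.exp_add]
    exact ENNReal.ofReal_le_ofReal (Real.exp_le_exp.2 (by linarith [h y hy]))
  by_contra hB
  rw [hA] at hle
  exact ENNReal.mul_ne_top ENNReal.ofReal_ne_top hB (top_le_iff.1 hle)

/-- The Feller natural-scale integral built from `b₀` and `σ` diverges at `1-δ`
iff the exponential integral involving `g z / (z(1-z))` diverges. -/
theorem stmt_0 (δ : ℝ) (hδ : δ ∈ Set.Ioo (0:ℝ) (1/2)) (g ψ b₀ σ : ℝ → ℝ)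
    (hg_cont : ContinuousOn g (Set.Ioo 0 (1 - δ)))
    (hg_lim : Filter.Tendsto g (𝓝[<] (1 - δ)) Filter.atTop)
    (hψ : ∀ s, ψ s = s * (-g s + 1/2) - s^2)
    (hb₀ : ∀ x, b₀ x = (1 - x) * ψ x - x * ψ (1 - x))
    (hσ : ∀ x, σ x = Real.sqrt 2 * x * (1 - x)) :
    ((∫⁻ y in Set.Ioo (1/2 : ℝ) (1 - δ),
        ENNReal.ofReal (Real.exp (- ∫ z in (1/2 : ℝ)..y, 2 * b₀ z / (σ z)^2))) = ⊤)
    ↔ ((∫⁻ y in Set.Ioo (1/2 : ℝ) (1 - δ),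
        ENNReal.ofReal (Real.exp (∫ z in (1/2 : ℝ)..y, g z / (z * (1 - z))))) = ⊤) := by
  obtain ⟨hδ0, hδ2⟩ := hδ
  set h : ℝ → ℝ := fun z => (g (1 - z) + 1 - 2 * z) / (z * (1 - z)) with hh
  have hden : ∀ z ∈ Icc (1/2 : ℝ) (1 - δ), z * (1 - z) ≠ 0 := fun z hz =>
    (mul_pos (by linarith [hz.1]) (by linarith [hz.2])).ne'
  have hdc (s : Set ℝ) : ContinuousOn (fun z : ℝ => z * (1 - z)) s := by fun_prop
  have hhc : ContinuousOn h (Icc (1/2) (1 - δ)) := by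
    have hgr : ContinuousOn (fun z => g (1 - z)) (Icc (1/2) (1 - δ)) :=
      hg_cont.comp (by fun_prop) fun z hz => ⟨by linarith [hz.2], by linarith [hz.1]⟩
    exact ((hgr.add continuousOn_const).sub (by fun_prop)).div (hdc _) hden
  obtain ⟨M, hM⟩ := isCompact_Icc.exists_bound_of_continuousOn hhc
  have hM0 : 0 ≤ M := (norm_nonneg _).trans (hM (1/2) ⟨le_rfl, by linarith⟩)
  have key : ∀ y ∈ Ioo (1/2 : ℝ) (1 - δ),
      |(- ∫ z in (1/2 : ℝ)..y, 2 * b₀ z / (σ z)^2) - ∫ z in (1/2 : ℝ)..y, g z / (z * (1 - z))|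
        ≤ M := by
    intro y hy
    have hsub : uIcc (1/2 : ℝ) y ⊆ Icc (1/2) (1 - δ) := by
      rw [uIcc_of_le hy.1.le]; exact Icc_subset_Icc_right hy.2.le
    have hhi : IntervalIntegrable h volume (1/2) y := (hhc.mono hsub).intervalIntegrable
    have hgi : IntervalIntegrable (fun z => g z / (z * (1 - z))) volume (1/2) y := by
      refine ContinuousOn.intervalIntegrable (ContinuousOn.div ?_ (hdc _)
        fun z hz => hden z (hsub hz))
      refine hg_cont.mono fun z hz => ?_
      rw [uIcc_of_le hy.1.le] at hz
      exact ⟨by linarith [hz.1], by linarith [hz.2, hy.2]⟩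
    have heq : ∫ z in (1/2 : ℝ)..y, 2 * b₀ z / (σ z)^2
        = ∫ z in (1/2 : ℝ)..y, (h z - g z / (z * (1 - z))) := by
      refine intervalIntegral.integral_congr fun z hz => ?_
      have h0 := hden z (hsub hz)
      have h1 := left_ne_zero_of_mul h0
      have h2 := right_ne_zero_of_mul h0
      simp only [hh, hb₀, hψ, hσ, mul_pow, Real.sq_sqrt (zero_le_two : (0:ℝ) ≤ 2)]
      field_simp
      ring
    rw [heq, intervalIntegral.integral_sub hhi hgi]
    have hb : ‖∫ z in (1/2 : ℝ)..y, h z‖ ≤ M * |y - 1/2| :=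
      intervalIntegral.norm_integral_le_of_norm_le_const fun z hz =>
        hM z (hsub (uIoc_subset_uIcc hz))
    have hlen : |y - 1/2| ≤ 1 := abs_le.2 ⟨by linarith [hy.1], by linarith [hy.2]⟩
    rw [Real.norm_eq_abs] at hb
    rw [show ∀ a b : ℝ, -(a - b) - b = -a by intros; ring, abs_neg]
    exact hb.trans (mul_le_of_le_one_right hM0 hlen)
  exact ⟨lintegral_exp_eq_top_of_le (M := M) measurableSet_Ioo fun y hy => by
      linarith [(abs_le.1 (key y hy)).2],
    lintegral_exp_eq_top_of_le (M := M) measurableSet_Ioo fun y hy => by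
      linarith [(abs_le.1 (key y hy)).1]⟩
end

section
/- Let δ ∈ (0, 1/2) and let g : (0, 1−δ) → ℝ be admissible. Define ψ(s) = s(−g(s) + 1/2) − s², b₀(x) = (1−x)ψ(x) − x·ψ(1−x), σ(x) = √2·x(1−x), and G(y) = exp( −∫_{1/2}^y 2·b₀(z)/σ(z)² dz ) for y ∈ [1/2, 1−δ). If ∫_{1/2}^{1−δ} G(y) dy < ∞, then ∫_{1/2}^{1−δ} ( ∫_x^{1−δ} G(y) dy ) · (1/G(x)) · 1/(2x²(1−x)²) dx < ∞. -/
/-!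
Write `β = 1 - δ`. Since `2 b₀(z) / σ(z)² = (-g(z) + g(1 - z) + 1 - 2z) / (z (1 - z))`, and since on
`(1/2, β)` the function `g` is bounded below (it tends to `+∞` at `β`) while `z ↦ g(1 - z)` is
bounded above (its argument stays in the compact interval `[δ, 1/2]`), this drift ratio is bounded
above (`drift_ratio_le`). Hence `G` is bounded away from `0`, so `1 / G` is bounded. The remaining
factors `∫_x^β G ≤ ∫_{1/2}^β G < ∞` and `1 / (2 x² (1 - x)²)` are bounded too, and a bounded function
has finite integral over a bounded interval.
-/

open MeasureTheory Set Filter Real Topology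

lemma exists_lower_bound {a b : ℝ} {g : ℝ → ℝ} (hg_cont : ContinuousOn g (Set.Ico a b))
    (hab : a < b) (hg_lim : Tendsto g (𝓝[<] b) atTop) :
    ∃ m, ∀ z ∈ Set.Ioo a b, m ≤ g z := by
  obtain ⟨c, hc, hc'⟩ := (mem_nhdsLT_iff_exists_Ioo_subset' hab).1
    (hg_lim.eventually_ge_atTop 0)
  have hcb : c < b := hc
  obtain ⟨m, hm⟩ := (isCompact_Icc (a := a) (b := c)).bddBelow_image
    (hg_cont.mono fun z hz => ⟨hz.1, hz.2.trans_lt hcb⟩)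
  refine ⟨min m 0, fun z hz => ?_⟩
  rcases le_or_gt z c with h | h
  · exact (min_le_left _ _).trans (hm ⟨z, ⟨hz.1.le, h⟩, rfl⟩)
  · exact (min_le_right _ _).trans (hc' ⟨h, hz.2⟩)

/-- The ratio is `(-g z + g (1 - z) + 1 - 2 z) / (z (1 - z))`; its numerator is at most
`|M - m|` and its denominator at least `δ / 2`. -/
lemma drift_ratio_le {δ m M z : ℝ} (hδ : 0 < δ) {g ψ b₀ σ : ℝ → ℝ}
    (hψ : ∀ s, ψ s = s * (-g s + 1/2) - s^2)
    (hb₀ : ∀ x, b₀ x = (1 - x) * ψ x - x * ψ (1 - x))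
    (hσ : ∀ x, σ x = Real.sqrt 2 * x * (1 - x))
    (hz : z ∈ Set.Ioo (1/2 : ℝ) (1 - δ)) (hm : m ≤ g z) (hM : g (1 - z) ≤ M) :
    2 * b₀ z / (σ z)^2 ≤ |M - m| / (δ / 2) := by
  obtain ⟨hz1, hz2⟩ := hz
  have h1 : 0 < 1 - z := by linarith
  have h0 : 0 < z := by linarith
  have e : 2 * b₀ z / (σ z)^2 = (-g z + g (1 - z) + 1 - 2 * z) / (z * (1 - z)) := by
    have hs : (σ z)^2 = 2 * (z * (1 - z))^2 := by
      rw [hσ, mul_assoc, mul_pow, Real.sq_sqrt (by norm_num)]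
    rw [hs, hb₀, hψ, hψ]
    field_simp
    ring
  rw [e]
  apply div_le_div₀ (abs_nonneg _)
  · linarith [le_abs_self (M - m)]
  · positivity
  · nlinarith

/-- Applied to the drift ratio, this gives the lower bound `exp (-L)` for `G`. -/
lemma integral_le_of_le {f : ℝ → ℝ} {a b y L : ℝ} (hL : 0 ≤ L) (hf : ∀ z ∈ Set.Ioo a b, f z ≤ L)
    (hy : y ∈ Set.Ioo a b) (hab : b - a ≤ 1) : ∫ z in a..y, f z ≤ L := by
  by_cases hi : IntervalIntegrable f volume a y
  · have h := intervalIntegral.integral_mono_on_of_le_Ioo hy.1.le hi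
      (intervalIntegrable_const (c := L)) fun z hz => hf z ⟨hz.1, hz.2.trans hy.2⟩
    rw [intervalIntegral.integral_const, smul_eq_mul] at h
    nlinarith [hy.1, hy.2]
  -- a non-integrable `f` has integral `0` by convention
  · rwa [intervalIntegral.integral_undef hi]

lemma tail_integral_le {G : ℝ → ℝ} (hG : ∀ y, 0 ≤ G y) {a b x : ℝ} (hx : x ∈ Set.Ioo a b)
    (hfin : (∫⁻ y in Set.Ioo a b, ENNReal.ofReal (G y)) < ⊤) :
    ∫ y in x..b, G y ≤ (∫⁻ y in Set.Ioo a b, ENNReal.ofReal (G y)).toReal := by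
  rw [intervalIntegral.integral_of_le hx.2.le, integral_Ioc_eq_integral_Ioo]
  have h := norm_integral_le_lintegral_norm (μ := volume.restrict (Set.Ioo x b)) G
  simp only [Real.norm_of_nonneg (hG _)] at h
  refine (le_abs_self _).trans (h.trans (ENNReal.toReal_mono hfin.ne ?_))
  exact lintegral_mono_set (Set.Ioo_subset_Ioo_left hx.1.le)

/-- If the natural-scale density `G` is integrable on `(1/2, 1-δ)`, then the
Feller integral `∫ (∫_x^{1-δ} G) · (1/G(x)) · 1/(2x²(1-x)²) dx` is finite. -/
theorem stmt_1 (δ : ℝ) (hδ : δ ∈ Set.Ioo (0:ℝ) (1/2)) (g ψ b₀ σ G : ℝ → ℝ)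
    (hg_cont : ContinuousOn g (Set.Ioo 0 (1 - δ)))
    (hg_lim : Filter.Tendsto g (𝓝[<] (1 - δ)) Filter.atTop)
    (hψ : ∀ s, ψ s = s * (-g s + 1/2) - s^2)
    (hb₀ : ∀ x, b₀ x = (1 - x) * ψ x - x * ψ (1 - x))
    (hσ : ∀ x, σ x = Real.sqrt 2 * x * (1 - x))
    (hG : ∀ y, G y = Real.exp (- ∫ z in (1/2 : ℝ)..y, 2 * b₀ z / (σ z)^2))
    (hfin : (∫⁻ y in Set.Ioo (1/2 : ℝ) (1 - δ), ENNReal.ofReal (G y)) < ⊤) :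
    (∫⁻ x in Set.Ioo (1/2 : ℝ) (1 - δ),
      ENNReal.ofReal ((∫ y in x..(1 - δ), G y) * (1 / G x) * (1 / (2 * x^2 * (1 - x)^2)))) < ⊤ := by
  obtain ⟨hδ0, hδ1⟩ := hδ
  obtain ⟨m, hm⟩ := exists_lower_bound
    (hg_cont.mono fun z (hz : z ∈ Set.Ico (1/2 : ℝ) (1 - δ)) => ⟨by linarith [hz.1], hz.2⟩)
    (by linarith) hg_lim
  obtain ⟨M, hM⟩ := (isCompact_Icc (a := δ) (b := 1/2)).bddAbove_image
    (hg_cont.mono fun z hz => ⟨by linarith [hz.1], by linarith [hz.2]⟩)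
  set L := |M - m| / (δ / 2) with hL
  have hL0 : 0 ≤ L := by positivity
  have hdrift : ∀ z ∈ Set.Ioo (1/2 : ℝ) (1 - δ), 2 * b₀ z / (σ z)^2 ≤ L := fun z hz =>
    drift_ratio_le hδ0 hψ hb₀ hσ hz (hm z hz)
      (hM ⟨1 - z, ⟨by linarith [hz.2], by linarith [hz.1]⟩, rfl⟩)
  have hGpos : ∀ y, 0 < G y := fun y => by rw [hG]; exact Real.exp_pos _
  set I := (∫⁻ y in Set.Ioo (1/2 : ℝ) (1 - δ), ENNReal.ofReal (G y)).toReal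
  have hbound : ∀ x ∈ Set.Ioo (1/2 : ℝ) (1 - δ),
      (∫ y in x..(1 - δ), G y) * (1 / G x) * (1 / (2 * x^2 * (1 - x)^2))
        ≤ I * Real.exp L * (1 / (2 * (1/2)^2 * δ^2)) := by
    intro x hx
    have hI := tail_integral_le (fun y => (hGpos y).le) hx hfin
    have hGx : 1 / G x ≤ Real.exp L := by
      rw [hG, one_div, ← Real.exp_neg, neg_neg]
      exact Real.exp_le_exp.2 (integral_le_of_le hL0 hdrift hx (by linarith))
    have hI0 : 0 ≤ I := ENNReal.toReal_nonneg
    have hGx0 : 0 ≤ 1 / G x := (one_div_pos.2 (hGpos x)).le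
    have hx1 : (1/2 : ℝ) ≤ x := hx.1.le
    have hx2 : δ ≤ 1 - x := by linarith [hx.2]
    gcongr
  calc _ ≤ ∫⁻ _ in Set.Ioo (1/2 : ℝ) (1 - δ),
        ENNReal.ofReal (I * Real.exp L * (1 / (2 * (1/2)^2 * δ^2))) :=
        setLIntegral_mono' measurableSet_Ioo fun x hx => ENNReal.ofReal_le_ofReal (hbound x hx)
    _ < ⊤ := by
      rw [setLIntegral_const, Real.volume_Ioo]
      exact ENNReal.mul_lt_top ENNReal.ofReal_lt_top ENNReal.ofReal_lt_top
end

section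
/- Let δ ∈ (0, 1/2) and let g : (0, 1−δ) → ℝ be admissible. Define F(y) = ∫_{1/2}^y g(z)/(z(1−z)) dz for y ∈ [1/2, 1−δ). If ∫_{1/2}^{1−δ} e^{F(y)} dy < ∞, then ∫_{1/2}^{1−δ} e^{−F(x)} ( ∫_x^{1−δ} e^{F(y)} dy ) dx < ∞. -/
/-!
The drift `g z / (z (1 - z))` tends to `+∞` at `1 - δ` and is continuous on `[1/2, 1 - δ)`, hence it
is bounded below there. Integrating over a bounded interval, `F` is bounded below on `(1/2, 1 - δ)`,
so `exp (-F)` is bounded above. The inner integral is at most the total mass `∫ exp F < ∞`, so the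
integrand of the outer integral is bounded on a set of finite measure.
-/

open MeasureTheory Set Filter Real Topology

theorem exists_lower_bound_of_tendsto_atTop {a b : ℝ} {g : ℝ → ℝ}
    (hg : ContinuousOn g (Set.Ico a b)) (hlim : Filter.Tendsto g (𝓝[<] b) Filter.atTop) :
    ∃ M : ℝ, 0 ≤ M ∧ ∀ z ∈ Set.Ico a b, -M ≤ g z := by
  obtain ⟨c, hc, hsub⟩ := mem_nhdsLT_iff_exists_Ico_subset.1
    (hlim.eventually_ge_atTop 0)
  have hcb : c < b := hc
  obtain ⟨M, hM⟩ := (isCompact_Icc (a := a) (b := c)).exists_bound_of_continuousOn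
    (hg.mono fun z hz => ⟨hz.1, hz.2.trans_lt hcb⟩)
  refine ⟨|M|, abs_nonneg M, fun z hz => ?_⟩
  rcases le_total z c with h | h
  · have h1 := hM z ⟨hz.1, h⟩
    rw [Real.norm_eq_abs] at h1
    linarith [neg_abs_le (g z), le_abs_self M]
  · have h1 : 0 ≤ g z := hsub ⟨h, hz.2⟩
    linarith [abs_nonneg M]

/-- Reduced Feller-test integral: if `∫_{1/2}^{1-δ} e^{F(y)} dy < ∞` for
`F(y) = ∫_{1/2}^y g(z)/(z(1-z)) dz`, then `∫ e^{-F(x)} (∫_x^{1-δ} e^{F(y)} dy) dx < ∞`. -/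
theorem stmt_2 (δ : ℝ) (hδ : δ ∈ Set.Ioo (0:ℝ) (1/2)) (g F : ℝ → ℝ)
    (hg_cont : ContinuousOn g (Set.Ioo 0 (1 - δ)))
    (hg_lim : Filter.Tendsto g (𝓝[<] (1 - δ)) Filter.atTop)
    (hF : ∀ y, F y = ∫ z in (1/2 : ℝ)..y, g z / (z * (1 - z)))
    (hfin : (∫⁻ y in Set.Ioo (1/2 : ℝ) (1 - δ), ENNReal.ofReal (Real.exp (F y))) < ⊤) :
    (∫⁻ x in Set.Ioo (1/2 : ℝ) (1 - δ),
      ENNReal.ofReal (Real.exp (-(F x)) * ∫ y in x..(1 - δ), Real.exp (F y))) < ⊤ := by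
  obtain ⟨hδ0, hδ1⟩ := hδ
  obtain ⟨M, hM0, hM⟩ := exists_lower_bound_of_tendsto_atTop (a := 1 / 2)
    (hg_cont.mono fun z hz => ⟨by linarith [hz.1], hz.2⟩) hg_lim
  -- On `[1/2, 1 - δ)` one has `z (1 - z) ≥ δ / 2`, and the interval has length at most `1`.
  have hFlow : ∀ y ∈ Set.Ioo (1/2 : ℝ) (1 - δ), -(M / (δ / 2)) ≤ F y := by
    intro y hy
    have hInt : IntervalIntegrable (fun z => g z / (z * (1 - z))) volume (1/2) y := by
      apply ContinuousOn.intervalIntegrable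
      rw [uIcc_of_le hy.1.le]
      refine (hg_cont.mono fun z hz => ⟨by linarith [hz.1], hz.2.trans_lt hy.2⟩).div
        (by fun_prop) fun z hz => ?_
      have h1 : 0 < z := by linarith [hz.1]
      have h2 : 0 < 1 - z := by linarith [hz.2, hy.2]
      positivity
    have hmono : ∫ _z in (1/2 : ℝ)..y, -(M / (δ / 2)) ≤ F y := by
      rw [hF y]
      refine intervalIntegral.integral_mono_on hy.1.le (by simp) hInt fun z hz => ?_
      have hz2 : z < 1 - δ := hz.2.trans_lt hy.2
      have hden : δ / 2 ≤ z * (1 - z) := by nlinarith [hz.1]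
      have hg := hM z ⟨hz.1, hz2⟩
      calc -(M / (δ / 2)) ≤ -(M / (z * (1 - z))) :=
            neg_le_neg (div_le_div_of_nonneg_left hM0 (by positivity) hden)
        _ = -M / (z * (1 - z)) := by ring
        _ ≤ _ := div_le_div_of_nonneg_right hg (by linarith)
    rw [intervalIntegral.integral_const, smul_eq_mul] at hmono
    have hq : 0 ≤ M / (δ / 2) := by positivity
    nlinarith [hy.1, hy.2]
  set K := ∫⁻ y in Set.Ioo (1/2 : ℝ) (1 - δ), ENNReal.ofReal (Real.exp (F y)) with hK
  -- `enorm_integral_le_lintegral_enorm` needs no integrability: a junk inner integral is `0`.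
  have hinner : ∀ x ∈ Set.Ioo (1/2 : ℝ) (1 - δ),
      ENNReal.ofReal (∫ y in x..(1 - δ), Real.exp (F y)) ≤ K := by
    intro x hx
    rw [intervalIntegral.integral_of_le hx.2.le, integral_Ioc_eq_integral_Ioo]
    calc ENNReal.ofReal (∫ y in Set.Ioo x (1 - δ), Real.exp (F y))
        ≤ ‖∫ y in Set.Ioo x (1 - δ), Real.exp (F y)‖ₑ := Real.ofReal_le_enorm _
      _ ≤ ∫⁻ y in Set.Ioo x (1 - δ), ‖Real.exp (F y)‖ₑ := enorm_integral_le_lintegral_enorm _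
      _ = ∫⁻ y in Set.Ioo x (1 - δ), ENNReal.ofReal (Real.exp (F y)) := by
          simp only [Real.enorm_of_nonneg (Real.exp_pos _).le]
      _ ≤ K := lintegral_mono_set (Set.Ioo_subset_Ioo_left hx.1.le)
  calc (∫⁻ x in Set.Ioo (1/2 : ℝ) (1 - δ),
        ENNReal.ofReal (Real.exp (-(F x)) * ∫ y in x..(1 - δ), Real.exp (F y)))
      ≤ ∫⁻ _x in Set.Ioo (1/2 : ℝ) (1 - δ), ENNReal.ofReal (Real.exp (M / (δ / 2))) * K := by
        refine setLIntegral_mono' measurableSet_Ioo fun x hx => ?_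
        rw [ENNReal.ofReal_mul (Real.exp_pos _).le]
        gcongr
        · linarith [hFlow x hx]
        · exact hinner x hx
    _ < ⊤ := by
        rw [setLIntegral_const]
        exact ENNReal.mul_lt_top (ENNReal.mul_lt_top ENNReal.ofReal_lt_top hfin)
          measure_Ioo_lt_top
end

section
/- Let δ ∈ (0, 1/2), let g : (0, 1−δ) → ℝ be admissible, and set A₂(z) = 1/(z(1−z)) and a₂ = A₂(1−δ) = 1/(δ(1−δ)). Suppose ∫_{1/2}^{1−δ} g(z) dz = +∞ and there exists ε > 0 such that ∫_{1/2}^{1−δ} exp( (a₂ − ε)·∫_{1/2}^y g(z) dz ) dy = +∞. Then ∫_{1/2}^{1−δ} exp( ∫_{1/2}^y A₂(z) g(z) dz ) dy = +∞. -/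
/-!
With `b = 1 - δ`, `A z = 1 / (z (1 - z))` and `c = A b - ε`, the function
`D y = ∫_{1/2}^y (A - c) g = ∫_{1/2}^y A g - c ∫_{1/2}^y g` is bounded below on `(1/2, b)`:
near `b` both `A - c` and `g` are nonnegative (`A` is continuous at `b` and `g → ∞`), so `D` is
nondecreasing there, while on a compact subinterval `[1/2, y₀]` it is continuous.
If `m ≤ D`, then `exp (c ∫ g) ≤ exp (-m) * exp (∫ A g)` pointwise, so divergence of the
integral of the left side forces divergence of the integral of `exp (∫ A g)`.
-/

open MeasureTheory Set Filter Real Topology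

/-- A primitive of a continuous function on `[a, b)` that is nonnegative near `b` is bounded
below on `(a, b)`. -/
lemma exists_le_primitive {a b : ℝ} (hab : a < b) {f : ℝ → ℝ} (hf : ContinuousOn f (Ico a b))
    (hpos : ∀ᶠ z in 𝓝[<] b, 0 ≤ f z) :
    ∃ m : ℝ, ∀ y ∈ Ioo a b, m ≤ ∫ z in a..y, f z := by
  have hint : ∀ u v, u ∈ Ico a b → v ∈ Ico a b → IntervalIntegrable f volume u v := by
    intro u v hu hv
    exact (hf.mono (ordConnected_Ico.uIcc_subset hu hv)).intervalIntegrable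
  obtain ⟨l, hl, hlf⟩ := (mem_nhdsLT_iff_exists_Ioo_subset' hab).1 hpos
  obtain ⟨y₀, hy₀, hy₀b⟩ := exists_between (max_lt hab hl)
  have hay₀ : a < y₀ := (le_max_left _ _).trans_lt hy₀
  have hly₀ : l < y₀ := (le_max_right _ _).trans_lt hy₀
  have ha : a ∈ Ico a b := ⟨le_rfl, hab⟩
  have hy₀m : y₀ ∈ Ico a b := ⟨hay₀.le, hy₀b⟩
  have hcont : ContinuousOn (fun y => ∫ z in a..y, f z) (Icc a y₀) := by
    have := intervalIntegral.continuousOn_primitive_interval (μ := volume) (f := f)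
      (a := a) (b := y₀) ?_
    · rwa [uIcc_of_le hay₀.le] at this
    · rw [uIcc_of_le hay₀.le]
      exact (hf.mono (Icc_subset_Ico_right hy₀b)).integrableOn_Icc
  obtain ⟨x, hx, hmin⟩ := isCompact_Icc.exists_isMinOn ⟨a, left_mem_Icc.2 hay₀.le⟩ hcont
  refine ⟨∫ z in a..x, f z, fun y hy => ?_⟩
  rcases le_total y y₀ with h | h
  · exact hmin ⟨hy.1.le, h⟩
  · have h1 : (∫ z in a..x, f z) ≤ ∫ z in a..y₀, f z := hmin ⟨hay₀.le, le_rfl⟩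
    have h2 : 0 ≤ ∫ z in y₀..y, f z :=
      intervalIntegral.integral_nonneg h fun z hz =>
        hlf ⟨hly₀.trans_le hz.1, hz.2.trans_lt hy.2⟩
    have h3 := intervalIntegral.integral_add_adjacent_intervals
      (hint a y₀ ha hy₀m) (hint y₀ y hy₀m ⟨hy.1.le, hy.2⟩)
    linarith

/-- Corollary 1(i), analytic content: if `∫_{1/2}^{1-δ} g = ∞` and for some
`ε > 0` the integral `∫ exp((a₂-ε)∫_{1/2}^y g) dy` diverges (`a₂ = 1/(δ(1-δ))`), then
`∫ exp(∫_{1/2}^y A₂(z) g(z) dz) dy` diverges, where `A₂(z) = 1/(z(1-z))`. -/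
theorem stmt_4 (δ : ℝ) (hδ : δ ∈ Set.Ioo (0:ℝ) (1/2)) (g : ℝ → ℝ)
    (hg_cont : ContinuousOn g (Set.Ioo 0 (1 - δ)))
    (hg_lim : Filter.Tendsto g (𝓝[<] (1 - δ)) Filter.atTop)
    (hdiv : (∫⁻ z in Set.Ioo (1/2 : ℝ) (1 - δ), ENNReal.ofReal (g z)) = ⊤)
    (hε : ∃ ε > (0:ℝ), (∫⁻ y in Set.Ioo (1/2 : ℝ) (1 - δ),
        ENNReal.ofReal (Real.exp ((1 / (δ * (1 - δ)) - ε) * ∫ z in (1/2 : ℝ)..y, g z))) = ⊤) :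
    (∫⁻ y in Set.Ioo (1/2 : ℝ) (1 - δ),
      ENNReal.ofReal (Real.exp (∫ z in (1/2 : ℝ)..y, (1 / (z * (1 - z))) * g z))) = ⊤ := by
  obtain ⟨hδ0, hδ2⟩ := hδ
  obtain ⟨ε, hε0, hε⟩ := hε
  set c : ℝ := 1 / (δ * (1 - δ)) - ε with hc
  have hab : (1 / 2 : ℝ) < 1 - δ := by linarith
  have hg : ContinuousOn g (Ico (1 / 2) (1 - δ)) :=
    hg_cont.mono fun z hz => ⟨by linarith [hz.1], hz.2⟩
  have hA : ContinuousOn (fun z : ℝ => 1 / (z * (1 - z))) (Ioo 0 1) := by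
    refine continuousOn_const.div (by fun_prop) fun z hz => ?_
    exact (mul_pos hz.1 (sub_pos.2 hz.2)).ne'
  have hAg : ContinuousOn (fun z : ℝ => 1 / (z * (1 - z)) * g z) (Ico (1 / 2) (1 - δ)) :=
    (hA.mono fun z hz => ⟨by linarith [hz.1], by linarith [hz.2]⟩).mul hg
  have hA_near : ∀ᶠ z in 𝓝[<] (1 - δ), c < 1 / (z * (1 - z)) := by
    have h := hA.continuousAt (Ioo_mem_nhds (by linarith : (0 : ℝ) < 1 - δ) (by linarith))
    have hval : c < 1 / ((1 - δ) * (1 - (1 - δ))) := by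
      rw [hc, sub_sub_cancel, mul_comm (1 - δ) δ]
      linarith
    exact (h.eventually (lt_mem_nhds hval)).filter_mono nhdsWithin_le_nhds
  have hpos : ∀ᶠ z in 𝓝[<] (1 - δ), 0 ≤ 1 / (z * (1 - z)) * g z - c * g z := by
    filter_upwards [hA_near, hg_lim.eventually_ge_atTop 0] with z h1 h2
    rw [← sub_mul]
    exact mul_nonneg (sub_nonneg.2 h1.le) h2
  obtain ⟨m, hm⟩ := exists_le_primitive hab
    (f := fun z => 1 / (z * (1 - z)) * g z - c * g z) (hAg.sub (continuousOn_const.mul hg)) hpos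
  have hle : (⊤ : ENNReal) ≤ ENNReal.ofReal (exp (-m)) * ∫⁻ y in Ioo (1/2 : ℝ) (1 - δ),
      ENNReal.ofReal (exp (∫ z in (1/2 : ℝ)..y, (1 / (z * (1 - z))) * g z)) := by
    rw [← lintegral_const_mul' _ _ ENNReal.ofReal_ne_top, ← hε]
    refine setLIntegral_mono' measurableSet_Ioo fun y hy => ?_
    rw [← ENNReal.ofReal_mul (exp_pos _).le, ← exp_add]
    refine ENNReal.ofReal_le_ofReal (exp_le_exp.2 ?_)
    have hsub : uIcc (1 / 2) y ⊆ Ico (1 / 2) (1 - δ) := by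
      rw [uIcc_of_le hy.1.le]
      exact Icc_subset_Ico_right hy.2
    have h := hm y hy
    rw [intervalIntegral.integral_sub (hAg.mono hsub).intervalIntegrable
      ((hg.mono hsub).intervalIntegrable.const_mul c), intervalIntegral.integral_const_mul] at h
    linarith
  by_contra hne
  exact ENNReal.mul_ne_top ENNReal.ofReal_ne_top hne (top_le_iff.1 hle)
end

section
/- Let δ ∈ (0, 1/2), let g : (0, 1−δ) → ℝ be admissible, and set A₂(z) = 1/(z(1−z)) and a₂ = A₂(1−δ) = 1/(δ(1−δ)). Suppose ∫_{1/2}^{1−δ} g(z) dz = +∞ and ∫_{1/2}^{1−δ} exp( a₂·∫_{1/2}^y g(z) dz ) dy < ∞. Then ∫_{1/2}^{1−δ} exp( ∫_{1/2}^y A₂(z) g(z) dz ) dy < ∞. -/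
open MeasureTheory Set Filter Real Topology

/-!
On `(1/2, 1-δ)` one has `z(1-z) ≥ δ(1-δ)`, hence `A₂(z) ≤ a₂`. Since `g → ∞` at `1-δ`, there is
`c < 1-δ` beyond which `g ≥ 0`, so `h = (A₂ - a₂) g` is nonpositive on `(c, 1-δ)`. Consequently
`∫_{1/2}^y h ≤ M := ∫_{1/2}^c |h|` for every `y`, that is
`∫_{1/2}^y A₂ g ≤ M + a₂ ∫_{1/2}^y g`. Exponentiating, the second integrand is dominated by `e^M`
times the first, whose integral is finite.
-/

/-- Corollary 1(ii), analytic content: if `∫_{1/2}^{1-δ} g = ∞` and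
`∫ exp(a₂ ∫_{1/2}^y g) dy < ∞` with `a₂ = 1/(δ(1-δ))`, then
`∫ exp(∫_{1/2}^y A₂(z) g(z) dz) dy < ∞`, where `A₂(z) = 1/(z(1-z))`. -/
theorem stmt_5 (δ : ℝ) (hδ : δ ∈ Set.Ioo (0:ℝ) (1/2)) (g : ℝ → ℝ)
    (hg_cont : ContinuousOn g (Set.Ioo 0 (1 - δ)))
    (hg_lim : Filter.Tendsto g (𝓝[<] (1 - δ)) Filter.atTop)
    (hdiv : (∫⁻ z in Set.Ioo (1/2 : ℝ) (1 - δ), ENNReal.ofReal (g z)) = ⊤)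
    (hfin : (∫⁻ y in Set.Ioo (1/2 : ℝ) (1 - δ),
        ENNReal.ofReal (Real.exp ((1 / (δ * (1 - δ))) * ∫ z in (1/2 : ℝ)..y, g z))) < ⊤) :
    (∫⁻ y in Set.Ioo (1/2 : ℝ) (1 - δ),
      ENNReal.ofReal (Real.exp (∫ z in (1/2 : ℝ)..y, (1 / (z * (1 - z))) * g z))) < ⊤ := by
  obtain ⟨h0, h1⟩ := hδ
  set a : ℝ := 1 / (δ * (1 - δ)) with ha
  obtain ⟨c₀, hc₀, hc₀g⟩ := (mem_nhdsLT_iff_exists_Ioo_subset).1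
    (hg_lim.eventually_ge_atTop 0)
  -- The maximum with the midpoint of `(1/2, 1-δ)` keeps `c` inside that interval.
  obtain ⟨c, hc1, hc2, hcg⟩ : ∃ c : ℝ, 1 / 2 < c ∧ c < 1 - δ ∧
      ∀ z, c < z → z < 1 - δ → 0 ≤ g z := by
    refine ⟨max c₀ ((1 / 2 + (1 - δ)) / 2), lt_max_of_lt_right (by linarith),
      max_lt hc₀ (by linarith), fun z hz hz' => hc₀g ⟨(le_max_left _ _).trans_lt hz, hz'⟩⟩
  have hA : ContinuousOn (fun z : ℝ => 1 / (z * (1 - z))) (Set.Ioo 0 (1 - δ)) := by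
    refine ContinuousOn.div continuousOn_const (by fun_prop) fun z hz => ?_
    exact (mul_pos hz.1 (by linarith [hz.2])).ne'
  set h : ℝ → ℝ := fun z => (1 / (z * (1 - z)) - a) * g z with hh
  have hcont : ContinuousOn h (Set.Ioo 0 (1 - δ)) := (hA.sub continuousOn_const).mul hg_cont
  have hint : ∀ f : ℝ → ℝ, ContinuousOn f (Set.Ioo 0 (1 - δ)) → ∀ x y : ℝ, 1 / 2 ≤ x → x ≤ y →
      y < 1 - δ → IntervalIntegrable f volume x y := by
    intro f hf x y hx hxy hy
    refine (hf.mono fun z hz => ?_).intervalIntegrable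
    rw [Set.uIcc_of_le hxy] at hz
    exact ⟨by linarith [hz.1], by linarith [hz.2]⟩
  have hneg : ∀ z, c < z → z < 1 - δ → h z ≤ 0 := by
    intro z hz hz'
    refine mul_nonpos_of_nonpos_of_nonneg (sub_nonpos.2 ?_) (hcg z hz hz')
    -- `z(1-z) - δ(1-δ) = (z-δ)(1-δ-z)`
    exact one_div_le_one_div_of_le (mul_pos h0 (by linarith))
      (by nlinarith [mul_pos (show 0 < z - δ by linarith) (show 0 < 1 - δ - z by linarith)])
  set M : ℝ := ∫ z in (1 / 2 : ℝ)..c, |h z| with hM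
  have hbd : ∀ y, 1 / 2 < y → y < 1 - δ → ∫ z in (1 / 2 : ℝ)..y, h z ≤ M := by
    intro y hy hy'
    have key : ∀ x, 1 / 2 ≤ x → x ≤ c → ∫ z in (1 / 2 : ℝ)..x, h z ≤ M := by
      intro x hx hxc
      have e := intervalIntegral.integral_add_adjacent_intervals
        (hint _ hcont.abs (1 / 2) x le_rfl hx (by linarith)) (hint _ hcont.abs x c hx hxc hc2)
      have p : 0 ≤ ∫ z in x..c, |h z| :=
        intervalIntegral.integral_nonneg hxc fun _ _ => abs_nonneg _
      have q : ∫ z in (1 / 2 : ℝ)..x, h z ≤ ∫ z in (1 / 2 : ℝ)..x, |h z| :=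
        intervalIntegral.integral_mono_on hx (hint _ hcont _ _ le_rfl hx (by linarith))
          (hint _ hcont.abs _ _ le_rfl hx (by linarith)) fun _ _ => le_abs_self _
      linarith
    rcases le_total y c with hyc | hyc
    · exact key y hy.le hyc
    · rw [← intervalIntegral.integral_add_adjacent_intervals
        (hint _ hcont (1 / 2) c le_rfl hc1.le hc2) (hint _ hcont c y hc1.le hyc hy')]
      have p : ∫ z in c..y, h z ≤ ∫ _z in c..y, (0 : ℝ) :=
        intervalIntegral.integral_mono_on_of_le_Ioo hyc (hint _ hcont c y hc1.le hyc hy')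
          (by simp) fun z hz => hneg z hz.1 (hz.2.trans hy')
      have q := key c hc1.le le_rfl
      simp only [intervalIntegral.integral_zero] at p
      linarith
  have hdom : ∀ y ∈ Set.Ioo (1 / 2 : ℝ) (1 - δ),
      ENNReal.ofReal (Real.exp (∫ z in (1 / 2 : ℝ)..y, (1 / (z * (1 - z))) * g z)) ≤
      ENNReal.ofReal (Real.exp M) *
        ENNReal.ofReal (Real.exp (a * ∫ z in (1 / 2 : ℝ)..y, g z)) := by
    intro y hy
    rw [← ENNReal.ofReal_mul (Real.exp_pos _).le, ← Real.exp_add]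
    refine ENNReal.ofReal_le_ofReal (Real.exp_le_exp.2 ?_)
    have e : ∫ z in (1 / 2 : ℝ)..y, h z =
        (∫ z in (1 / 2 : ℝ)..y, (1 / (z * (1 - z))) * g z) -
          a * ∫ z in (1 / 2 : ℝ)..y, g z := by
      rw [← intervalIntegral.integral_const_mul, ← intervalIntegral.integral_sub
        (hint (fun z => 1 / (z * (1 - z)) * g z) (hA.mul hg_cont) _ _ le_rfl hy.1.le hy.2)
        ((hint _ hg_cont _ _ le_rfl hy.1.le hy.2).const_mul a)]
      simp only [hh, sub_mul]
    linarith [hbd y hy.1 hy.2]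
  refine (setLIntegral_mono' measurableSet_Ioo hdom).trans_lt ?_
  rw [lintegral_const_mul' _ _ ENNReal.ofReal_ne_top]
  exact ENNReal.mul_lt_top ENNReal.ofReal_lt_top hfin
end

section
/- Let δ ∈ (0, 1/2), let n ≥ 2 be an integer, let g : (0, 1−δ) → ℝ be continuous, and let C₁ ∈ ℝ and x₂ ∈ (0, 1−δ). Define ψ(s) = s(−g(s) + 1/2) − s², b₁(z) = ψ(z)(1−z) − C₁·z, σ(z) = √2·z(1−z), κ² = (1 + (n−1)⁻¹)/2, and A₁(z) = (2/(1 + (n−1)⁻¹)) · 1/(z(1−z)). Then ∫_{x₂}^{1−δ} exp( −∫_{x₂}^y 2·κ⁻²·b₁(z)/σ(z)² dz ) dy < ∞ if and only if ∫_{x₂}^{1−δ} exp( ∫_{x₂}^y A₁(z) g(z) dz ) dy < ∞. -/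
/-!
Write `K = 2 / (1 + (n - 1)⁻¹)`. Substituting the formulas for `b₁` and `σ` gives
`-2 K b₁(z) / σ(z)² = K g(z) / (z (1 - z)) + ε(z)`, where the error term `ε` (`errTerm` below) does not
involve `g` and is continuous on `(0, 1)`, hence bounded on the compact interval `[x₂, 1 - δ]`.
The two exponents therefore differ by a bounded function of `y`, the two exponentials are
comparable up to multiplicative constants, and their integrals are finite simultaneously
(`lintegral_exp_lt_top_of_le_add`).
-/

open MeasureTheory Set Filter Real Topology

/-- The part of `-2 K b₁ / σ²` that does not involve `g`. -/
noncomputable def errTerm (K C z : ℝ) : ℝ :=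
  K * (C / (z * (1 - z) ^ 2) - (1 / 2 - z) / (z * (1 - z)))

lemma continuousOn_errTerm (K C : ℝ) : ContinuousOn (errTerm K C) (Set.Ioo 0 1) := by
  unfold errTerm
  have h0 : ∀ z ∈ Set.Ioo (0 : ℝ) 1, z ≠ 0 := fun z hz => hz.1.ne'
  have h1 : ∀ z ∈ Set.Ioo (0 : ℝ) 1, 1 - z ≠ 0 := fun z hz => (sub_pos.2 hz.2).ne'
  refine continuousOn_const.mul (ContinuousOn.sub ?_ ?_)
  · exact ContinuousOn.div (by fun_prop) (by fun_prop)
      fun z hz => mul_ne_zero (h0 z hz) (pow_ne_zero 2 (h1 z hz))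
  · exact ContinuousOn.div (by fun_prop) (by fun_prop)
      fun z hz => mul_ne_zero (h0 z hz) (h1 z hz)

/-- No measurability of `u` or `v` is needed, since `lintegral` is monotone and commutes with
finite constant factors for arbitrary functions. -/
lemma lintegral_exp_lt_top_of_le_add {u v : ℝ → ℝ} {M : ℝ} {s : Set ℝ} (hs : MeasurableSet s)
    (h : ∀ y ∈ s, u y ≤ M + v y)
    (hv : ∫⁻ y in s, ENNReal.ofReal (Real.exp (v y)) < ⊤) :
    ∫⁻ y in s, ENNReal.ofReal (Real.exp (u y)) < ⊤ := by
  calc ∫⁻ y in s, ENNReal.ofReal (Real.exp (u y))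
      ≤ ∫⁻ y in s, ENNReal.ofReal (Real.exp M) * ENNReal.ofReal (Real.exp (v y)) := by
        refine setLIntegral_mono' hs fun y hy => ?_
        rw [← ENNReal.ofReal_mul (Real.exp_pos M).le, ← Real.exp_add]
        exact ENNReal.ofReal_le_ofReal (Real.exp_le_exp.2 (h y hy))
    _ = ENNReal.ofReal (Real.exp M) * ∫⁻ y in s, ENNReal.ofReal (Real.exp (v y)) :=
        lintegral_const_mul' _ _ ENNReal.ofReal_ne_top
    _ < ⊤ := ENNReal.mul_lt_top ENNReal.ofReal_lt_top hv

/-- The natural-scale integral of the comparison diffusion with drift `κ⁻² b₁`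
(`κ² = (1+(n-1)⁻¹)/2`) is finite iff `∫_{x₂}^{1-δ} exp(∫_{x₂}^y A₁(z) g(z) dz) dy < ∞`,
where `A₁(z) = (2/(1+(n-1)⁻¹))·1/(z(1-z))`. -/
theorem stmt_7 (δ : ℝ) (hδ : δ ∈ Set.Ioo (0:ℝ) (1/2)) (n : ℕ) (hn : 2 ≤ n)
    (g ψ b₁ σ : ℝ → ℝ) (C₁ x₂ : ℝ) (hx₂ : x₂ ∈ Set.Ioo (0:ℝ) (1 - δ))
    (hg_cont : ContinuousOn g (Set.Ioo 0 (1 - δ)))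
    (hψ : ∀ s, ψ s = s * (-g s + 1/2) - s^2)
    (hb₁ : ∀ z, b₁ z = ψ z * (1 - z) - C₁ * z)
    (hσ : ∀ z, σ z = Real.sqrt 2 * z * (1 - z)) :
    ((∫⁻ y in Set.Ioo x₂ (1 - δ),
        ENNReal.ofReal (Real.exp (- ∫ z in x₂..y,
          2 * (2 / (1 + ((n : ℝ) - 1)⁻¹)) * b₁ z / (σ z)^2))) < ⊤)
    ↔ ((∫⁻ y in Set.Ioo x₂ (1 - δ),
        ENNReal.ofReal (Real.exp (∫ z in x₂..y,
          (2 / (1 + ((n : ℝ) - 1)⁻¹)) * (1 / (z * (1 - z))) * g z))) < ⊤) := by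
  obtain ⟨hδ0, -⟩ := hδ
  obtain ⟨hx0, hx1⟩ := hx₂
  -- the value of `κ⁻²` plays no role beyond being a constant
  generalize 2 / (1 + ((n : ℝ) - 1)⁻¹) = K
  have hcont : ContinuousOn (errTerm K C₁) (Set.Icc x₂ (1 - δ)) :=
    (continuousOn_errTerm K C₁).mono fun z hz => ⟨by linarith [hz.1], by linarith [hz.2]⟩
  obtain ⟨B, hB⟩ := isCompact_Icc.exists_bound_of_continuousOn hcont
  have hB0 : 0 ≤ B := (norm_nonneg _).trans (hB x₂ ⟨le_rfl, hx1.le⟩)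
  have key : ∀ y ∈ Set.Ioo x₂ (1 - δ),
      |(- ∫ z in x₂..y, 2 * K * b₁ z / (σ z)^2)
        - ∫ z in x₂..y, K * (1 / (z * (1 - z))) * g z| ≤ B := by
    intro y hy
    have hsub : Set.uIcc x₂ y ⊆ Set.Ioo 0 (1 - δ) := by
      rw [Set.uIcc_of_le hy.1.le]
      exact fun z hz => ⟨by linarith [hz.1], by linarith [hz.2, hy.2]⟩
    have hint_g : IntervalIntegrable (fun z => K * (1 / (z * (1 - z))) * g z) volume x₂ y := by
      refine ContinuousOn.intervalIntegrable ?_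
      refine ContinuousOn.mul (continuousOn_const.mul
        (ContinuousOn.div (by fun_prop) (by fun_prop) fun z hz => ?_)) (hg_cont.mono hsub)
      have := hsub hz
      exact mul_ne_zero this.1.ne' (by linarith [this.2])
    have hint_e : IntervalIntegrable (errTerm K C₁) volume x₂ y := by
      refine ((continuousOn_errTerm K C₁).mono fun z hz => ?_).intervalIntegrable
      have := hsub hz
      exact ⟨this.1, by linarith [this.2]⟩
    have heq : (- ∫ z in x₂..y, 2 * K * b₁ z / (σ z)^2)
        = ∫ z in x₂..y, (K * (1 / (z * (1 - z))) * g z + errTerm K C₁ z) := by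
      rw [← intervalIntegral.integral_neg]
      refine intervalIntegral.integral_congr fun z hz => ?_
      have hz' := hsub hz
      have h0 : z ≠ 0 := hz'.1.ne'
      have h1 : 1 - z ≠ 0 := by linarith [hz'.2]
      have hs : σ z ^ 2 = 2 * z ^ 2 * (1 - z) ^ 2 := by
        rw [hσ, mul_pow, mul_pow, Real.sq_sqrt (by norm_num)]
      simp only [hs, hb₁, hψ, errTerm]
      field_simp
      ring
    rw [heq, intervalIntegral.integral_add hint_g hint_e, add_sub_cancel_left, ← Real.norm_eq_abs]
    refine (intervalIntegral.norm_integral_le_of_norm_le_const (C := B) fun z hz => ?_).trans ?_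
    · rw [Set.uIoc_of_le hy.1.le] at hz
      exact hB z ⟨hz.1.le, hz.2.trans hy.2.le⟩
    · -- the interval has length at most `1`
      rw [abs_of_pos (sub_pos.2 hy.1)]
      exact mul_le_of_le_one_right hB0 (by linarith [hy.2])
  constructor
  · refine lintegral_exp_lt_top_of_le_add (M := B) measurableSet_Ioo fun y hy => ?_
    linarith [(abs_le.1 (key y hy)).1]
  · refine lintegral_exp_lt_top_of_le_add (M := B) measurableSet_Ioo fun y hy => ?_
    linarith [(abs_le.1 (key y hy)).2]
end

section
/- Let δ ∈ (0, 1/2), let x₀ ∈ (0, 1−δ), let g : (0, 1−δ) → ℝ be admissible, and set A₂(z) = 1/(z(1−z)) and a₂ = A₂(1−δ) = 1/(δ(1−δ)). Suppose ∫_{x₀}^{1−δ} g(z) dz = +∞ and there exists ε > 0 such that ∫_{x₀}^{1−δ} exp( (a₂ − ε)·∫_{x₀}^y g(z) dz ) dy = +∞. Then ∫_{x₀}^{1−δ} exp( ∫_{x₀}^y A₂(z) g(z) dz ) dy = +∞. -/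
/-!
Write `h z = (A₂ z - (a₂ - ε)) * g z`, so that the exponent in the conclusion is the exponent in the
hypothesis plus `∫_{x₀}^y h`. Near `1 - δ` both factors of `h` are nonnegative, since `A₂` is
continuous with value `a₂` there and `g → +∞`; on the remaining compact interval `h` is bounded
below by continuity. Hence `∫_{x₀}^y h` is bounded below uniformly in `y` by some constant `C`, the
integrand in the conclusion is at least `exp C` times the one in the hypothesis, and divergence
carries over.
-/

open MeasureTheory Set Filter Real Topology

/-- A function continuous on `[a, b)` and eventually nonnegative at `b⁻` is bounded below. -/
lemma exists_lower_bound_s13 {a b : ℝ} {h : ℝ → ℝ} (hab : a < b) (hc : ContinuousOn h (Set.Ico a b))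
    (hn : ∀ᶠ z in 𝓝[<] b, 0 ≤ h z) : ∃ M : ℝ, 0 ≤ M ∧ ∀ z ∈ Set.Ico a b, -M ≤ h z := by
  obtain ⟨c, hcb, hcn⟩ := (mem_nhdsLT_iff_exists_Ioo_subset' hab).1 hn
  obtain ⟨B, hB⟩ := (isCompact_Icc (a := a) (b := c)).bddBelow_image
    (hc.mono fun z hz => ⟨hz.1, hz.2.trans_lt hcb⟩)
  refine ⟨max 0 (-B), le_max_left _ _, fun z hz => ?_⟩
  rcases le_or_gt z c with hzc | hzc
  · have h1 : B ≤ h z := hB ⟨z, ⟨hz.1, hzc⟩, rfl⟩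
    have h2 := le_max_right 0 (-B)
    linarith
  · have h1 : 0 ≤ h z := hcn ⟨hzc, hz.2⟩
    have h2 := le_max_left 0 (-B)
    linarith

/-- Corollary 2(i), analytic content: with base point `x₀ ∈ (0, 1-δ)`:
if `∫_{x₀}^{1-δ} g = ∞` and for some `ε > 0` the integral
`∫ exp((a₂-ε)∫_{x₀}^y g) dy` diverges (`a₂ = 1/(δ(1-δ))`), then
`∫ exp(∫_{x₀}^y A₂(z) g(z) dz) dy` diverges, where `A₂(z) = 1/(z(1-z))`. -/
theorem stmt_13 (δ x₀ : ℝ) (hδ : δ ∈ Set.Ioo (0:ℝ) (1/2)) (hx₀ : x₀ ∈ Set.Ioo (0:ℝ) (1 - δ))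
    (g : ℝ → ℝ)
    (hg_cont : ContinuousOn g (Set.Ioo 0 (1 - δ)))
    (hg_lim : Filter.Tendsto g (𝓝[<] (1 - δ)) Filter.atTop)
    (hdiv : (∫⁻ z in Set.Ioo x₀ (1 - δ), ENNReal.ofReal (g z)) = ⊤)
    (hε : ∃ ε > (0:ℝ), (∫⁻ y in Set.Ioo x₀ (1 - δ),
        ENNReal.ofReal (Real.exp ((1 / (δ * (1 - δ)) - ε) * ∫ z in x₀..y, g z))) = ⊤) :
    (∫⁻ y in Set.Ioo x₀ (1 - δ),
      ENNReal.ofReal (Real.exp (∫ z in x₀..y, (1 / (z * (1 - z))) * g z))) = ⊤ := by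
  obtain ⟨ε, hε0, hε⟩ := hε
  obtain ⟨hδ0, hδ1⟩ := hδ
  obtain ⟨hx0, hx1⟩ := hx₀
  set k : ℝ := 1 / (δ * (1 - δ)) - ε with hk
  have hgc : ContinuousOn g (Set.Ico x₀ (1 - δ)) :=
    hg_cont.mono fun z hz => ⟨hx0.trans_le hz.1, hz.2⟩
  have hAc : ∀ z ∈ Set.Ioo (0:ℝ) 1, ContinuousAt (fun z : ℝ => 1 / (z * (1 - z))) z := by
    intro z hz
    have h0 : z * (1 - z) ≠ 0 := (mul_pos hz.1 (sub_pos.2 hz.2)).ne'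
    exact continuousAt_const.div (by fun_prop) h0
  have hAgc : ContinuousOn (fun z => 1 / (z * (1 - z)) * g z) (Set.Ico x₀ (1 - δ)) :=
    ContinuousOn.mul (fun z hz => (hAc z ⟨hx0.trans_le hz.1, by linarith [hz.2]⟩).continuousWithinAt)
      hgc
  have hn : ∀ᶠ z in 𝓝[<] (1 - δ), 0 ≤ 1 / (z * (1 - z)) * g z - k * g z := by
    have hA : ∀ᶠ z in 𝓝[<] (1 - δ), k < 1 / (z * (1 - z)) := by
      refine ((hAc (1 - δ) ⟨by linarith, by linarith⟩).eventually
        (lt_mem_nhds ?_)).filter_mono nhdsWithin_le_nhds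
      have : (1 - δ) * (1 - (1 - δ)) = δ * (1 - δ) := by ring
      simp only [this, hk]
      linarith
    filter_upwards [hA, hg_lim.eventually_ge_atTop 0] with z h1 h2
    rw [← sub_mul]
    exact mul_nonneg (by linarith) h2
  obtain ⟨M, hM0, hM⟩ := exists_lower_bound_s13 hx1 (hAgc.sub (continuousOn_const.mul hgc)) hn
  have key : ∀ y ∈ Set.Ioo x₀ (1 - δ), -M * (1 - δ - x₀) + k * (∫ z in x₀..y, g z)
      ≤ ∫ z in x₀..y, 1 / (z * (1 - z)) * g z := by
    intro y hy
    have hsub : Set.Icc x₀ y ⊆ Set.Ico x₀ (1 - δ) := fun z hz => ⟨hz.1, hz.2.trans_lt hy.2⟩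
    have i1 := (hgc.mono hsub).intervalIntegrable_of_Icc (μ := volume) hy.1.le
    have i2 := (hAgc.mono hsub).intervalIntegrable_of_Icc (μ := volume) hy.1.le
    have h := intervalIntegral.integral_mono_on (μ := volume) (f := fun _ => -M) hy.1.le
      intervalIntegrable_const (i2.sub (i1.const_mul k)) fun z hz => hM z (hsub hz)
    rw [intervalIntegral.integral_sub i2 (i1.const_mul k), intervalIntegral.integral_const_mul,
      intervalIntegral.integral_const, smul_eq_mul] at h
    nlinarith [mul_nonneg hM0 (sub_nonneg.2 hy.2.le)]
  rw [eq_top_iff]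
  calc (⊤ : ENNReal) = ENNReal.ofReal (Real.exp (-M * (1 - δ - x₀))) *
        ∫⁻ y in Set.Ioo x₀ (1 - δ), ENNReal.ofReal (Real.exp (k * ∫ z in x₀..y, g z)) := by
        rw [hε, ENNReal.mul_top (ENNReal.ofReal_pos.2 (Real.exp_pos _)).ne']
    _ = ∫⁻ y in Set.Ioo x₀ (1 - δ), ENNReal.ofReal (Real.exp (-M * (1 - δ - x₀))) *
          ENNReal.ofReal (Real.exp (k * ∫ z in x₀..y, g z)) :=
        (lintegral_const_mul' _ _ ENNReal.ofReal_ne_top).symm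
    _ ≤ _ := by
        refine setLIntegral_mono' measurableSet_Ioo fun y hy => ?_
        rw [← ENNReal.ofReal_mul (Real.exp_pos _).le, ← Real.exp_add]
        exact ENNReal.ofReal_le_ofReal (Real.exp_le_exp.2 (key y hy))
end

section
/- Let δ ∈ (0, 1/2), let n ≥ 2 be an integer, let x₀ ∈ (0, 1−δ), let g : (0, 1−δ) → ℝ be admissible, and set A₁(z) = (2/(1 + (n−1)⁻¹)) · 1/(z(1−z)) and a₁ = A₁(1−δ). Suppose ∫_{x₀}^{1−δ} g(z) dz = +∞ and ∫_{x₀}^{1−δ} exp( a₁·∫_{x₀}^y g(z) dz ) dy < ∞. Then ∫_{x₀}^{1−δ} exp( ∫_{x₀}^y A₁(z) g(z) dz ) dy < ∞. -/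
open MeasureTheory Set Filter Real Topology

/-!
Write `A z = c / (z (1 - z))` with `c > 0`, so that the two constants compared are `A z` and
`a = A (1 - δ)`. Since `z (1 - z) ≥ δ (1 - δ)` for `z ∈ [δ, 1 - δ]`, one has `A z ≤ a` there, and
`g ≥ 0` near `1 - δ`; hence `(A z - a) g z ≤ 0` near `1 - δ`. On the remaining compact interval this
function is continuous, so it is bounded above by some `M ≥ 0` on all of `[x₀, 1 - δ)`
(`exists_upper_bound`). Integrating, `∫ A g ≤ M + a ∫ g` up to every `y < 1 - δ`, and the integrand
of the conclusion is at most `exp M` times the integrand assumed to have finite integral.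
-/

/-- The only possible blow-up of `(A z - a) g z` is at `1 - δ`, where it is nonpositive. -/
lemma exists_upper_bound {δ x₀ c : ℝ} (hδ : δ ∈ Set.Ioo (0:ℝ) (1/2))
    (hx₀ : x₀ ∈ Set.Ioo (0:ℝ) (1 - δ)) (hc : 0 ≤ c) {g : ℝ → ℝ}
    (hg_cont : ContinuousOn g (Set.Ioo 0 (1 - δ)))
    (hg_lim : Filter.Tendsto g (𝓝[<] (1 - δ)) Filter.atTop) :
    ∃ M : ℝ, 0 ≤ M ∧ ∀ z ∈ Set.Ico x₀ (1 - δ),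
      c * (1 / (z * (1 - z))) * g z ≤ M + c * (1 / ((1 - δ) * (1 - (1 - δ)))) * g z := by
  obtain ⟨hδ0, hδ1⟩ := hδ
  obtain ⟨hx0, hx1⟩ := hx₀
  obtain ⟨l, hl, hlg⟩ := (mem_nhdsLT_iff_exists_Ioo_subset).1
    (hg_lim.eventually (eventually_ge_atTop 0))
  simp only [Set.mem_Iio] at hl
  obtain ⟨z₁, hz, hz1⟩ := exists_between (max_lt hl (show δ < 1 - δ by linarith))
  obtain ⟨hlz, hδz⟩ := max_lt_iff.1 hz
  have hsub : Set.Icc x₀ z₁ ⊆ Set.Ioo 0 (1 - δ) := fun z hz =>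
    ⟨hx0.trans_le hz.1, hz.2.trans_lt hz1⟩
  have hcont : ContinuousOn (fun z => c * (1 / (z * (1 - z))) * g z
      - c * (1 / ((1 - δ) * (1 - (1 - δ)))) * g z) (Set.Icc x₀ z₁) := by
    have hg := hg_cont.mono hsub
    have hne : ∀ z ∈ Set.Icc x₀ z₁, z * (1 - z) ≠ 0 := fun z hz => by
      have := hsub hz
      exact (mul_pos this.1 (by linarith [this.2])).ne'
    fun_prop (disch := assumption)
  obtain ⟨C, hC⟩ := isCompact_Icc.exists_bound_of_continuousOn hcont
  refine ⟨max C 0, le_max_right _ _, fun z hz => ?_⟩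
  rcases le_or_gt z z₁ with h | h
  · have := (le_abs_self _).trans (hC z ⟨hz.1, h⟩)
    linarith [le_max_left C 0]
  · have hg0 : 0 ≤ g z := hlg ⟨hlz.trans h, hz.2⟩
    have hA : 1 / (z * (1 - z)) ≤ 1 / ((1 - δ) * (1 - (1 - δ))) := by
      apply one_div_le_one_div_of_le
      · exact mul_pos (by linarith) (by linarith)
      · -- the difference of the two sides is `(z - δ) (1 - δ - z)`
        nlinarith [mul_nonneg (sub_nonneg.2 (hδz.trans h).le) (sub_nonneg.2 hz.2.le)]
    have := mul_le_mul_of_nonneg_right (mul_le_mul_of_nonneg_left hA hc) hg0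
    linarith [le_max_right C 0]

/-- Corollary 2(ii), analytic content: with `A₁(z) = (2/(1+(n-1)⁻¹))·1/(z(1-z))`
and `a₁ = A₁(1-δ)`: if `∫_{x₀}^{1-δ} g = ∞` and `∫ exp(a₁ ∫_{x₀}^y g) dy < ∞`, then
`∫ exp(∫_{x₀}^y A₁(z) g(z) dz) dy < ∞`. -/
theorem stmt_14 (δ x₀ : ℝ) (hδ : δ ∈ Set.Ioo (0:ℝ) (1/2)) (n : ℕ) (hn : 2 ≤ n)
    (hx₀ : x₀ ∈ Set.Ioo (0:ℝ) (1 - δ)) (g : ℝ → ℝ)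
    (hg_cont : ContinuousOn g (Set.Ioo 0 (1 - δ)))
    (hg_lim : Filter.Tendsto g (𝓝[<] (1 - δ)) Filter.atTop)
    (hdiv : (∫⁻ z in Set.Ioo x₀ (1 - δ), ENNReal.ofReal (g z)) = ⊤)
    (hfin : (∫⁻ y in Set.Ioo x₀ (1 - δ),
        ENNReal.ofReal (Real.exp
          ((2 / (1 + ((n : ℝ) - 1)⁻¹) * (1 / ((1 - δ) * (1 - (1 - δ))))) *
            ∫ z in x₀..y, g z))) < ⊤) :
    (∫⁻ y in Set.Ioo x₀ (1 - δ),
      ENNReal.ofReal (Real.exp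
        (∫ z in x₀..y, (2 / (1 + ((n : ℝ) - 1)⁻¹)) * (1 / (z * (1 - z))) * g z))) < ⊤ := by
  have hc : 0 ≤ 2 / (1 + ((n : ℝ) - 1)⁻¹) := by
    have : (2 : ℝ) ≤ n := by exact_mod_cast hn
    have : 0 ≤ ((n : ℝ) - 1)⁻¹ := inv_nonneg.2 (by linarith)
    positivity
  generalize 2 / (1 + ((n : ℝ) - 1)⁻¹) = c at *
  obtain ⟨M, hM, hbound⟩ := exists_upper_bound hδ hx₀ hc hg_cont hg_lim
  generalize c * (1 / ((1 - δ) * (1 - (1 - δ)))) = a at *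
  have key : ∀ y ∈ Set.Ioo x₀ (1 - δ),
      ∫ z in x₀..y, c * (1 / (z * (1 - z))) * g z ≤ M + a * ∫ z in x₀..y, g z := by
    intro y hy
    have hsub : Set.Icc x₀ y ⊆ Set.Ioo 0 (1 - δ) := fun z hz =>
      ⟨hx₀.1.trans_le hz.1, hz.2.trans_lt hy.2⟩
    have hg := hg_cont.mono hsub
    have hne : ∀ z ∈ Set.Icc x₀ y, z * (1 - z) ≠ 0 := fun z hz => by
      have := hsub hz
      exact (mul_pos this.1 (by linarith [this.2, hδ.1])).ne'
    have hcont : ContinuousOn (fun z => c * (1 / (z * (1 - z))) * g z) (Set.Icc x₀ y) := by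
      fun_prop (disch := assumption)
    have hgi := hg.intervalIntegrable_of_Icc (μ := volume) hy.1.le
    calc ∫ z in x₀..y, c * (1 / (z * (1 - z))) * g z
        ≤ ∫ z in x₀..y, (M + a * g z) :=
          intervalIntegral.integral_mono_on hy.1.le (hcont.intervalIntegrable_of_Icc hy.1.le)
            (intervalIntegrable_const.add (hgi.const_mul a))
            fun z hz => hbound z ⟨hz.1, hz.2.trans_lt hy.2⟩
      _ = (y - x₀) * M + a * ∫ z in x₀..y, g z := by
          rw [intervalIntegral.integral_add intervalIntegrable_const (hgi.const_mul a),
            intervalIntegral.integral_const, intervalIntegral.integral_const_mul, smul_eq_mul]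
      _ ≤ M + a * ∫ z in x₀..y, g z := by
          -- the interval has length at most one
          have : (y - x₀) * M ≤ 1 * M :=
            mul_le_mul_of_nonneg_right (by linarith [hy.2, hδ.1, hx₀.1]) hM
          linarith
  calc ∫⁻ y in Set.Ioo x₀ (1 - δ),
        ENNReal.ofReal (Real.exp (∫ z in x₀..y, c * (1 / (z * (1 - z))) * g z))
      ≤ ∫⁻ y in Set.Ioo x₀ (1 - δ), ENNReal.ofReal (Real.exp M) *
          ENNReal.ofReal (Real.exp (a * ∫ z in x₀..y, g z)) := by
        refine setLIntegral_mono' measurableSet_Ioo fun y hy => ?_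
        rw [← ENNReal.ofReal_mul (Real.exp_pos M).le, ← Real.exp_add]
        exact ENNReal.ofReal_le_ofReal (Real.exp_le_exp.2 (key y hy))
    _ = ENNReal.ofReal (Real.exp M) * ∫⁻ y in Set.Ioo x₀ (1 - δ),
          ENNReal.ofReal (Real.exp (a * ∫ z in x₀..y, g z)) :=
        lintegral_const_mul' _ _ ENNReal.ofReal_ne_top
    _ < ⊤ := ENNReal.mul_lt_top ENNReal.ofReal_lt_top hfin
end

section
/- Let δ ∈ (0, 1/2). Then ∫_{1/2}^{1−δ} exp( ∫_{1/2}^y (δ(1−δ)) / ( (1−δ−z)·z·(1−z) ) dz ) dy = +∞. -/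
/-!
Write `c = 1 - δ`. Since `z (1 - z) - δ c = (c - z) (z - δ)`, the inner integrand equals
`1 / (c - z) - (z - δ) / (z (1 - z))`, and the subtracted term is at most `1 / (1 - z) ≤ 1 / δ`
for `z ≤ c`. Integrating, the exponential is at least `K / (c - y)` with a constant `K > 0`
(`const_div_le_exp_integral`), and `y ↦ 1 / (c - y)` is not integrable at `c`.
-/

open MeasureTheory Set Filter Real Topology

lemma sub_le_integrand {δ z : ℝ} (h0 : 0 < δ) (hz : 0 < z) (hzc : z < 1 - δ) :
    (1 - δ - z)⁻¹ - δ⁻¹ ≤ (δ * (1 - δ)) / ((1 - δ - z) * z * (1 - z)) := by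
  have h1 : 0 < 1 - δ - z := by linarith
  have h2 : 0 < 1 - z := by linarith
  have key : (δ * (1 - δ)) / ((1 - δ - z) * z * (1 - z))
      = (1 - δ - z)⁻¹ - (z - δ) / (z * (1 - z)) := by
    field_simp
    ring
  have h3 : (z - δ) / (z * (1 - z)) ≤ δ⁻¹ := by
    rw [inv_eq_one_div, div_le_div_iff₀ (by positivity) h0]
    nlinarith [mul_pos hz h1, mul_pos h0 h0]
  linarith

/-- The blow-up rate `1 / (1 - δ - y)` of the outer integrand at the right endpoint. -/
lemma const_div_le_exp_integral {δ y : ℝ} (h0 : 0 < δ) (hy : 1 / 2 < y) (hyc : y < 1 - δ) :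
    (1 / 2 - δ) * exp (-δ⁻¹) * (1 - δ - y)⁻¹ ≤
      exp (∫ z in (1 / 2 : ℝ)..y, (δ * (1 - δ)) / ((1 - δ - z) * z * (1 - z))) := by
  have hle : (1 / 2 : ℝ) ≤ y := hy.le
  have hne : ∀ z ∈ uIcc (1 / 2 : ℝ) y, 1 - δ - z ≠ 0 := by
    intro z hz
    rw [uIcc_of_le hle] at hz
    have := hz.2
    intro h
    linarith
  have hint1 : IntervalIntegrable (fun z : ℝ => (1 - δ - z)⁻¹ - δ⁻¹) volume (1 / 2) y := by
    apply ContinuousOn.intervalIntegrable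
    exact (ContinuousOn.inv₀ (by fun_prop) hne).sub continuousOn_const
  have hint2 : IntervalIntegrable
      (fun z : ℝ => (δ * (1 - δ)) / ((1 - δ - z) * z * (1 - z))) volume (1 / 2) y := by
    apply ContinuousOn.intervalIntegrable
    refine ContinuousOn.div (by fun_prop) (by fun_prop) fun z hz => ?_
    have h1 := hne z hz
    rw [uIcc_of_le hle] at hz
    have h2 : z ≠ 0 := by have := hz.1; intro h; linarith
    have h3 : 1 - z ≠ 0 := by have := hz.2; intro h; linarith
    exact mul_ne_zero (mul_ne_zero h1 h2) h3
  have hmono := intervalIntegral.integral_mono_on hle hint1 hint2 fun z hz =>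
    sub_le_integrand h0 (by linarith [hz.1]) (by linarith [hz.2])
  have hval : ∫ z in (1 / 2 : ℝ)..y, ((1 - δ - z)⁻¹ - δ⁻¹)
      = (-log (1 - δ - y) - y * δ⁻¹) - (-log (1 - δ - 1 / 2) - 1 / 2 * δ⁻¹) := by
    refine intervalIntegral.integral_eq_sub_of_hasDerivAt
      (f := fun z => -log (1 - δ - z) - z * δ⁻¹) (fun z hz => ?_) hint1
    have h1 : HasDerivAt (fun z : ℝ => 1 - δ - z) (-1) z := by
      simpa using (hasDerivAt_id z).const_sub (1 - δ)
    have h2 := (h1.log (hne z hz)).neg.sub ((hasDerivAt_id z).mul_const δ⁻¹)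
    refine HasDerivAt.congr_deriv h2 ?_
    rw [neg_div, neg_neg, one_div, one_mul]
  have hA : 0 < 1 / 2 - δ := by linarith
  have hB : 0 < 1 - δ - y := by linarith
  have hK : (1 / 2 - δ) * exp (-δ⁻¹) * (1 - δ - y)⁻¹
      = exp (log (1 / 2 - δ) + -δ⁻¹ + -log (1 - δ - y)) := by
    rw [exp_add, exp_add, exp_log hA, exp_neg (log _), exp_log hB]
  rw [hK, exp_le_exp]
  refine le_trans ?_ hmono
  rw [hval, show 1 - δ - 1 / 2 = 1 / 2 - δ by ring]
  have : (y - 1 / 2) * δ⁻¹ ≤ 1 * δ⁻¹ :=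
    mul_le_mul_of_nonneg_right (by linarith) (inv_pos.2 h0).le
  linarith

/-- Example 1, critical case `p = δ(1-δ)`:
`∫_{1/2}^{1-δ} exp(∫_{1/2}^y δ(1-δ)/((1-δ-z) z (1-z)) dz) dy = +∞`. -/
theorem stmt_16 (δ : ℝ) (hδ : δ ∈ Set.Ioo (0:ℝ) (1/2)) :
    (∫⁻ y in Set.Ioo (1/2 : ℝ) (1 - δ),
      ENNReal.ofReal (Real.exp (∫ z in (1/2 : ℝ)..y,
        (δ * (1 - δ)) / ((1 - δ - z) * z * (1 - z))))) = ⊤ := by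
  obtain ⟨h0, h1⟩ := hδ
  have hK : 0 < (1 / 2 - δ) * exp (-δ⁻¹) := mul_pos (by linarith) (exp_pos _)
  set K := (1 / 2 - δ) * exp (-δ⁻¹) with hKdef
  have hle : (1 / 2 : ℝ) ≤ 1 - δ := by linarith
  have hmono : ∫⁻ y in Ioo (1 / 2 : ℝ) (1 - δ), ENNReal.ofReal (K * (1 - δ - y)⁻¹) ≤
      ∫⁻ y in Ioo (1 / 2 : ℝ) (1 - δ), ENNReal.ofReal (exp (∫ z in (1 / 2 : ℝ)..y,
        (δ * (1 - δ)) / ((1 - δ - z) * z * (1 - z)))) :=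
    setLIntegral_mono' measurableSet_Ioo fun y hy =>
      ENNReal.ofReal_le_ofReal (const_div_le_exp_integral h0 hy.1 hy.2)
  refine top_le_iff.1 (le_trans (top_le_iff.2 ?_) hmono)
  by_contra hfin
  have hmeas : Measurable fun y : ℝ => K * (1 - δ - y)⁻¹ := by fun_prop
  have hnn : 0 ≤ᵐ[volume.restrict (Ioo (1 / 2 : ℝ) (1 - δ))]
      fun y : ℝ => K * (1 - δ - y)⁻¹ := by
    filter_upwards [ae_restrict_mem measurableSet_Ioo] with y hy
    exact mul_nonneg hK.le (inv_nonneg.2 (by linarith [hy.2]))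
  have hI := (lintegral_ofReal_ne_top_iff_integrable hmeas.aestronglyMeasurable hnn).1 hfin
  have hII : IntervalIntegrable (fun y : ℝ => K * (1 - δ - y)⁻¹) volume (1 / 2) (1 - δ) :=
    (intervalIntegrable_iff_integrableOn_Ioo_of_le hle).2 hI
  have hinv : IntervalIntegrable (fun y : ℝ => (y - (1 - δ))⁻¹) volume (1 / 2) (1 - δ) := by
    convert hII.const_mul (-K⁻¹) using 2 with y
    rw [← neg_sub y (1 - δ), inv_neg]
    field_simp
  rcases intervalIntegrable_sub_inv_iff.1 hinv with h | h
  · linarith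
  · exact h right_mem_uIcc
end
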